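/- Energy estimate for the lattice heat equation: let u(t) solve du/dt = Δu on ℤ² with u(0) = φ ∈ l²(ℤ²), where Δ is the unit-weight graph Laplacian. Then for all t ≥ 0: ‖u(t)‖_{l²}² + (1+t) N_{1,2}²(u(t)) + ∫₀ᵗ N_{1,2}²(u(τ)) dτ + ∫₀ᵗ (1+τ) N_{2,2}²(u(τ)) dτ ≤ (2 + C₁) ‖φ‖_{l²}², where C₁ is a universal constant such that N_{1,2}²(v) ≤ C₁‖v‖_{l²}² for all v ∈ l²(ℤ²). -/

import Mathlib

/-- The four lattice directions on ℤ². -/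
def latDir : Fin 4 → ℤ × ℤ := ![(1, 0), (0, 1), (-1, 0), (0, -1)]

/-- The basic difference operators D₁,…,D₄ on ℤ². -/
def Dop (i : Fin 4) (u : ℤ × ℤ → ℝ) (p : ℤ × ℤ) : ℝ := u (p + latDir i) - u p

/-- The unit-weight graph Laplacian on ℤ². -/
def latLap (u : ℤ × ℤ → ℝ) (p : ℤ × ℤ) : ℝ := ∑ i : Fin 4, Dop i u p

/-- The squared first-order seminorm N_{1,2}²(u) = ∑_i ‖D_i u‖². -/
noncomputable def N12sq (u : ℤ × ℤ → ℝ) : ℝ :=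
  ∑ i : Fin 4, ∑' p : ℤ × ℤ, (Dop i u p) ^ 2

/-- The squared second-order seminorm N_{2,2}²(u) = ∑_{i,j} ‖D_i D_j u‖². -/
noncomputable def N22sq (u : ℤ × ℤ → ℝ) : ℝ :=
  ∑ i : Fin 4, ∑ j : Fin 4, ∑' p : ℤ × ℤ, (Dop i (Dop j u) p) ^ 2

open Set Filter Topology

abbrev EE := lp (fun _ : ℤ × ℤ => ℝ) 2

lemma two_pos' : 0 < (2 : ENNReal).toReal := by simp

lemma EE_norm_sq (f : EE) : ‖f‖ ^ 2 = ∑' p, (f p) ^ 2 := by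
  have h := lp.norm_rpow_eq_tsum two_pos' f
  simpa using h

lemma EE_sum_le (f : EE) (S : Finset (ℤ × ℤ)) : ∑ p ∈ S, (f p) ^ 2 ≤ ‖f‖ ^ 2 := by
  have h := lp.sum_rpow_le_norm_rpow two_pos' f S
  simpa using h

lemma EE_norm_le {f : EE} {C : ℝ} (hC : 0 ≤ C)
    (h : ∀ S : Finset (ℤ × ℤ), ∑ p ∈ S, (f p) ^ 2 ≤ C ^ 2) : ‖f‖ ≤ C := by
  apply lp.norm_le_of_forall_sum_le two_pos' hC
  simpa using h

lemma EE_lip {X X' : ℝ → EE} {s t C : ℝ} (hC : 0 ≤ C)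
    (hd : ∀ p, ∀ r ∈ uIcc s t, HasDerivAt (fun r => X r p) (X' r p) r)
    (hb : ∀ r ∈ uIcc s t, ‖X' r‖ ≤ C) : ‖X t - X s‖ ≤ C * |t - s| := by
  apply EE_norm_le (by positivity)
  intro S
  set x : EE := X t - X s with hx
  set Q := ∑ p ∈ S, (x p) ^ 2 with hQ
  have hQ0 : 0 ≤ Q := Finset.sum_nonneg fun _ _ => sq_nonneg _
  have key := Convex.norm_image_sub_le_of_norm_hasDerivWithin_le (s := uIcc s t)
    (f := fun r => ∑ p ∈ S, x p * X r p) (f' := fun r => ∑ p ∈ S, x p * X' r p)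
    (C := √Q * C) (x := s) (y := t)
    (fun r hr => HasDerivAt.hasDerivWithinAt
      (HasDerivAt.fun_sum fun p _ => (hd p r hr).const_mul (x p)))
    (fun r hr => by
      rw [Real.norm_eq_abs]
      apply abs_le_of_sq_le_sq _ (by positivity)
      rw [mul_pow, Real.sq_sqrt hQ0]
      refine (Finset.sum_mul_sq_le_sq_mul_sq S _ _).trans ?_
      have h1 := EE_sum_le (X' r) S
      have h2 : ‖X' r‖ ^ 2 ≤ C ^ 2 := by
        have := hb r hr
        gcongr
      gcongr
      exact h1.trans h2)
    (convex_uIcc s t) left_mem_uIcc right_mem_uIcc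
  have e : (∑ p ∈ S, x p * X t p) - (∑ p ∈ S, x p * X s p) = Q := by
    rw [← Finset.sum_sub_distrib, hQ]
    refine Finset.sum_congr rfl fun p _ => ?_
    have : x p = X t p - X s p := rfl
    rw [← mul_sub, ← this, sq]
  simp only [e] at key
  rw [Real.norm_eq_abs, Real.norm_eq_abs, abs_of_nonneg hQ0] at key
  rw [← Real.sqrt_le_left (by positivity)]
  rcases hQ0.eq_or_lt with h | h
  · rw [← h]; simp; positivity
  · have h1 : 0 < √Q := Real.sqrt_pos.2 h
    have h2 : √Q * √Q = Q := Real.mul_self_sqrt hQ0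
    have : √Q * √Q ≤ √Q * (C * |t - s|) := by rw [h2]; linarith
    exact le_of_mul_le_mul_left this h1

def GoodAt (U : ℝ → EE) (t : ℝ) : Prop := ∃ M : ℝ, ∀ᶠ s in 𝓝 t, ‖U s‖ ≤ M

lemma good_hasDerivAt {U : ℝ → EE} {A : EE →L[ℝ] EE}
    (hU : ∀ p t, HasDerivAt (fun s => U s p) (A (U t) p) t) {t : ℝ} (ht : GoodAt U t) :
    HasDerivAt U (A (U t)) t := by
  obtain ⟨M, hM⟩ := ht
  obtain ⟨ε, hε, hM⟩ := Metric.eventually_nhds_iff_ball.1 hM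
  have hM0 : 0 ≤ M := (norm_nonneg _).trans (hM t (Metric.mem_ball_self hε))
  have hsub : ∀ s ∈ Metric.ball t ε, ∀ r ∈ uIcc t s, r ∈ Metric.ball t ε := fun s hs r hr =>
    (convex_ball t ε).ordConnected.uIcc_subset (Metric.mem_ball_self hε) hs hr
  have lip : ∀ s ∈ Metric.ball t ε, ‖U s - U t‖ ≤ (‖A‖ * M) * |s - t| := by
    intro s hs
    refine EE_lip (X' := fun r => A (U r)) (by positivity) (fun p r _ => hU p r) ?_
    intro r hr
    refine (A.le_opNorm _).trans ?_
    have := hM r (hsub s hs r hr)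
    gcongr
  have quad : ∀ s ∈ Metric.ball t ε, ‖U s - U t - (s - t) • A (U t)‖
      ≤ (‖A‖ * (‖A‖ * M)) * |s - t| ^ 2 := by
    intro s hs
    have := EE_lip (X := fun r => U r - r • A (U t)) (X' := fun r => A (U r) - A (U t))
      (s := t) (t := s) (C := ‖A‖ * ((‖A‖ * M) * |s - t|)) (by positivity)
      (fun p r _ => by
        have := (hU p r).sub ((hasDerivAt_id r).mul_const (A (U t) p))
        rw [one_mul] at this
        exact this) ?_
    · convert this using 1
      · congr 1; rw [sub_smul]; abel
      · ring
    · intro r hr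
      rw [← map_sub]
      refine (A.le_opNorm _).trans ?_
      have h1 := lip r (hsub s hs r hr)
      have h2 : |r - t| ≤ |s - t| := abs_sub_left_of_mem_uIcc hr
      gcongr
      exact h1.trans (by gcongr)
  rw [hasDerivAt_iff_isLittleO]
  have hO : (fun s => U s - U t - (s - t) • A (U t)) =O[𝓝 t] fun s => (s - t) ^ 2 := by
    apply Asymptotics.IsBigO.of_bound (‖A‖ * (‖A‖ * M))
    filter_upwards [Metric.ball_mem_nhds t hε] with s hs
    simpa using quad s hs
  refine hO.trans_isLittleO ?_
  have := (Asymptotics.isLittleO_pow_id (𝕜 := ℝ) (n := 2) (by norm_num))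
  exact this.comp_tendsto (k := fun s => s - t) (by
    have : Tendsto (fun s : ℝ => s - t) (𝓝 t) (𝓝 (t - t)) := (continuous_id.sub continuous_const).tendsto t
    simpa using this)

lemma EE_apply_cont (p : ℤ × ℤ) : Continuous (fun f : EE => f p) :=
  (LipschitzWith.of_dist_le_mul (K := 1) (fun f g => by
    rw [dist_eq_norm, dist_eq_norm]
    have := lp.norm_apply_le_norm (p := 2) (by norm_num) (f - g) p
    simpa using this)).continuous

noncomputable def PP (A : EE →L[ℝ] EE) (t : ℝ) : EE →L[ℝ] EE := NormedSpace.exp (t • A)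

lemma PP_deriv (A : EE →L[ℝ] EE) (t : ℝ) : HasDerivAt (PP A) (PP A t * A) t :=
  hasDerivAt_exp_smul_const A t

lemma PP_deriv' (A : EE →L[ℝ] EE) (t : ℝ) : HasDerivAt (PP A) (A * PP A t) t :=
  hasDerivAt_exp_smul_const' A t

lemma PP_cont (A : EE →L[ℝ] EE) : Continuous (PP A) :=
  continuous_iff_continuousAt.2 fun t => (PP_deriv A t).continuousAt

lemma PP_zero (A : EE →L[ℝ] EE) : PP A 0 = 1 := by simp [PP]

lemma PP_mul_neg (A : EE →L[ℝ] EE) (t : ℝ) : PP A t * PP (-A) t = 1 := by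
  unfold PP
  letI : NormedAlgebra ℚ (EE →L[ℝ] EE) := NormedAlgebra.restrictScalars ℚ ℝ _
  rw [smul_neg, ← NormedSpace.exp_add_of_commute (Commute.refl _).neg_right]
  simp

lemma PP_neg_mul (A : EE →L[ℝ] EE) (t : ℝ) : PP (-A) t * PP A t = 1 := by
  have := PP_mul_neg (-A) t
  rwa [neg_neg] at this

lemma PP_mul_neg_apply (A : EE →L[ℝ] EE) (t : ℝ) (x : EE) : PP A t (PP (-A) t x) = x := by
  have := congrArg (fun B => B x) (PP_mul_neg A t)
  simpa using this

lemma PP_neg_mul_apply (A : EE →L[ℝ] EE) (t : ℝ) (x : EE) : PP (-A) t (PP A t x) = x := by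
  have := congrArg (fun B => B x) (PP_neg_mul A t)
  simpa using this

lemma V_deriv {U : ℝ → EE} {A : EE →L[ℝ] EE} {t : ℝ} (h : HasDerivAt U (A (U t)) t) :
    HasDerivAt (fun t => PP (-A) t (U t)) 0 t := by
  have := (PP_deriv (-A) t).clm_apply h
  simpa using this

/-- If `V` equals `v` near `c` along a nontrivial filter then `V c = v`. -/
lemma V_end {U : ℝ → EE} {A : EE →L[ℝ] EE}
    (hU : ∀ p t, HasDerivAt (fun s => U s p) (A (U t) p) t) {c : ℝ} {l : Filter ℝ} [l.NeBot]
    (hl : l ≤ 𝓝 c) (v : EE) (h : ∀ᶠ s in l, PP (-A) s (U s) = v) : PP (-A) c (U c) = v := by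
  have h1 : U c = PP A c v := by
    apply lp.ext
    funext p
    have e1 : Tendsto (fun s => U s p) l (𝓝 (U c p)) := (hU p c).continuousAt.tendsto.mono_left hl
    have e2 : Tendsto (fun s => (PP A s v) p) l (𝓝 ((PP A c v) p)) := by
      have : Continuous fun s => (PP A s v) p :=
        (EE_apply_cont p).comp ((PP_cont A).clm_apply continuous_const)
      exact (this.tendsto c).mono_left hl
    refine tendsto_nhds_unique (e1.congr' ?_) e2
    filter_upwards [h] with s hs
    rw [← hs, PP_mul_neg_apply]
  rw [h1, PP_neg_mul_apply]

lemma V_const {U : ℝ → EE} {A : EE →L[ℝ] EE}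
    (hU : ∀ p t, HasDerivAt (fun s => U s p) (A (U t) p) t) {c d : ℝ} (hcd : c < d)
    (hg : ∀ t ∈ Ioo c d, GoodAt U t) : PP (-A) c (U c) = PP (-A) d (U d) := by
  have hD : ∀ t ∈ Ioo c d, HasDerivAt (fun t => PP (-A) t (U t)) 0 t := fun t ht =>
    V_deriv (good_hasDerivAt hU (hg t ht))
  obtain ⟨a, ha⟩ := isOpen_Ioo.exists_is_const_of_deriv_eq_zero (isPreconnected_Ioo (a := c) (b := d))
    (fun t ht => (hD t ht).differentiableAt.differentiableWithinAt) (fun t ht => (hD t ht).deriv)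
  rw [V_end hU (c := c) (l := 𝓝[>] c) nhdsWithin_le_nhds a
      (by filter_upwards [Ioo_mem_nhdsGT hcd] with s hs using ha s hs),
    V_end hU (c := d) (l := 𝓝[<] d) nhdsWithin_le_nhds a
      (by filter_upwards [Ioo_mem_nhdsLT hcd] with s hs using ha s hs)]

lemma closed_le {U : ℝ → EE} (hc : ∀ p, Continuous fun t => U t p) (M : ℝ) :
    IsClosed {t | ‖U t‖ ≤ M} := by
  apply IsSeqClosed.isClosed
  intro x t hx hxt
  refine lp.norm_le_of_tendsto (l := atTop) (F := fun n => U (x n))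
    (Eventually.of_forall hx) ?_
  rw [tendsto_pi_nhds]
  intro p
  exact ((hc p).tendsto t).comp hxt

lemma all_good {U : ℝ → EE} {A : EE →L[ℝ] EE}
    (hU : ∀ p t, HasDerivAt (fun s => U s p) (A (U t) p) t) (t : ℝ) : GoodAt U t := by
  have hc : ∀ p, Continuous fun t => U t p := fun p =>
    continuous_iff_continuousAt.2 fun t => (hU p t).continuousAt
  by_contra hbad
  set B : Set ℝ := {t | ¬ GoodAt U t} with hB
  have hBo : IsClosed B := by
    rw [← isOpen_compl_iff]
    have : Bᶜ = {t | GoodAt U t} := by ext; simp [hB]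
    rw [this, isOpen_iff_mem_nhds]
    rintro s ⟨M, hM⟩
    filter_upwards [eventually_eventually_nhds.2 hM] with r hr using ⟨M, hr⟩
  have : Nonempty B := ⟨⟨t, hbad⟩⟩
  have : CompleteSpace B := hBo.completeSpace_coe
  obtain ⟨n, ⟨⟨t0, ht0⟩, hint⟩⟩ := nonempty_interior_of_iUnion_of_closed
    (X := B) (f := fun n : ℕ => {t : B | ‖U t‖ ≤ n})
    (fun n => (closed_le hc n).preimage continuous_subtype_val)
    (by
      ext s
      simpa using exists_nat_ge ‖U s‖)
  rw [mem_interior_iff_mem_nhds, Metric.mem_nhds_iff] at hint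
  obtain ⟨ε, hε, hint⟩ := hint
  have hint' : ∀ s ∈ B, |s - t0| < ε → ‖U s‖ ≤ n := fun s hs h =>
    hint (show (⟨s, hs⟩ : B) ∈ Metric.ball _ ε from h)
  obtain ⟨K1, hK1⟩ := (isCompact_Icc (a := t0 - ε) (b := t0 + ε)).exists_bound_of_continuousOn
    (PP_cont A).continuousOn
  obtain ⟨K2, hK2⟩ := (isCompact_Icc (a := t0 - ε) (b := t0 + ε)).exists_bound_of_continuousOn
    (PP_cont (-A)).continuousOn
  have bound : ∀ s c, |s - t0| < ε → |c - t0| < ε → c ∈ B →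
      PP (-A) c (U c) = PP (-A) s (U s) → ‖U s‖ ≤ K1 * (K2 * n) := by
    intro s c hs hc' hcB he
    have e : U s = PP A s (PP (-A) c (U c)) := by rw [he, PP_mul_neg_apply]
    rw [abs_lt] at hs
    have h1 := hK1 s ⟨by linarith, by linarith⟩
    have h3 := hint' c hcB hc'
    rw [abs_lt] at hc'
    have h2 := hK2 c ⟨by linarith, by linarith⟩
    have k1 := (norm_nonneg _).trans h1
    have k2 := (norm_nonneg _).trans h2
    rw [e]
    refine (ContinuousLinearMap.le_of_opNorm_le _ h1 _).trans ?_
    gcongr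
    refine (ContinuousLinearMap.le_of_opNorm_le _ h2 _).trans ?_
    gcongr
  apply ht0
  refine ⟨K1 * (K2 * n), ?_⟩
  filter_upwards [Metric.ball_mem_nhds t0 hε] with s hs
  rw [Metric.mem_ball, Real.dist_eq] at hs
  by_cases hsB : s ∈ B
  · exact bound s s hs hs hsB rfl
  rcases lt_trichotomy s t0 with h | h | h
  · have hne : (B ∩ Icc s t0).Nonempty := ⟨t0, ht0, h.le, le_rfl⟩
    have hcl : IsCompact (B ∩ Icc s t0) := isCompact_Icc.inter_left hBo
    obtain ⟨c, ⟨hcB, hcs, hct⟩, hmin⟩ := hcl.exists_isLeast hne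
    have hsc : s < c := lt_of_le_of_ne hcs (fun e => hsB (e ▸ hcB))
    refine bound s c hs ?_ hcB (V_const hU hsc ?_).symm
    · rw [abs_lt] at *; constructor <;> linarith
    · intro r hr
      by_contra hr'
      exact absurd (hmin ⟨hr', hr.1.le, hr.2.le.trans hct⟩) (not_le.2 hr.2)
  · exact absurd (h ▸ ht0) hsB
  · have hne : (B ∩ Icc t0 s).Nonempty := ⟨t0, ht0, le_rfl, h.le⟩
    have hcl : IsCompact (B ∩ Icc t0 s) := isCompact_Icc.inter_left hBo
    obtain ⟨c, ⟨hcB, hct, hcs⟩, hmax⟩ := hcl.exists_isGreatest hne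
    have hsc : c < s := lt_of_le_of_ne hcs (fun e => hsB (e ▸ hcB))
    refine bound s c hs ?_ hcB (V_const hU hsc ?_)
    · rw [abs_lt] at *; constructor <;> linarith
    · intro r hr
      by_contra hr'
      exact absurd (hmax ⟨hr', hct.trans hr.1.le, hr.2.le⟩) (not_le.2 hr.1)

/-- Shift on `l²`. -/
noncomputable def shiftEE (d : ℤ × ℤ) : EE →L[ℝ] EE :=
  LinearMap.mkContinuous (σ := RingHom.id ℝ)
    { toFun := fun f => ⟨fun p => f (p + d), by
        have h := (lp.memℓp f).summable two_pos'
        exact memℓp_gen ((Equiv.addRight d).summable_iff.2 h)⟩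
      map_add' := fun f g => rfl
      map_smul' := fun c f => rfl } 1 (fun f => by
        rw [one_mul]
        refine lp.norm_le_of_tsum_le two_pos' (norm_nonneg f) ?_
        rw [lp.norm_rpow_eq_tsum two_pos' f]
        exact ((Equiv.addRight d).tsum_eq (fun p => ‖f p‖ ^ (2 : ENNReal).toReal)).le)

lemma shiftEE_apply (d : ℤ × ℤ) (f : EE) (p : ℤ × ℤ) : shiftEE d f p = f (p + d) := rfl

lemma shiftEE_norm (d : ℤ × ℤ) (f : EE) : ‖shiftEE d f‖ ^ 2 = ‖f‖ ^ 2 := by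
  rw [EE_norm_sq, EE_norm_sq]
  exact (Equiv.addRight d).tsum_eq (fun p => (f p) ^ 2)

noncomputable def DD (i : Fin 4) : EE →L[ℝ] EE := shiftEE (latDir i) - 1

lemma DD_apply (i : Fin 4) (f : EE) : ⇑(DD i f) = Dop i f := rfl

noncomputable def AA : EE →L[ℝ] EE := ∑ i, DD i

lemma AA_apply' (f : EE) : AA f = ∑ i, DD i f := by simp [AA]

lemma AA_apply (f : EE) : ⇑(AA f) = latLap f := by
  funext p
  rw [AA_apply', lp.coeFn_sum, Finset.sum_apply]
  rfl

lemma DD_comm (i j : Fin 4) (f : EE) : DD i (DD j f) = DD j (DD i f) := by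
  apply lp.ext
  funext p
  simp only [DD_apply, Dop]
  rw [add_right_comm]
  ring

lemma DD_AA (i : Fin 4) (f : EE) : DD i (AA f) = AA (DD i f) := by
  rw [AA_apply', AA_apply', map_sum]
  exact Finset.sum_congr rfl fun j _ => DD_comm i j f

lemma N12_eq (f : EE) : N12sq f = ∑ i, ‖DD i f‖ ^ 2 := by
  simp only [N12sq, EE_norm_sq, DD_apply]

lemma N22_eq (f : EE) : N22sq f = ∑ i, ∑ j, ‖DD i (DD j f)‖ ^ 2 := by
  simp only [N22sq, EE_norm_sq, DD_apply]

lemma inner_DD (i : Fin 4) (f : EE) : 2 * inner ℝ f (DD i f) = - ‖DD i f‖ ^ 2 := by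
  have h1 : shiftEE (latDir i) f = f + DD i f := by simp [DD]
  have h2 := shiftEE_norm (latDir i) f
  rw [h1, norm_add_sq_real] at h2
  linarith

lemma inner_AA (f : EE) : 2 * inner ℝ f (AA f) = - N12sq f := by
  rw [AA_apply', inner_sum, Finset.mul_sum, N12_eq, ← Finset.sum_neg_distrib]
  exact Finset.sum_congr rfl fun i _ => inner_DD i f

lemma energy {U : ℝ → EE} (hU : ∀ t, HasDerivAt U (AA (U t)) t) (t : ℝ) :
    HasDerivAt (fun t => ‖U t‖ ^ 2) (- N12sq (U t)) t := by
  rw [← inner_AA]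
  exact (hU t).norm_sq

lemma energy2 {U : ℝ → EE} (hU : ∀ t, HasDerivAt U (AA (U t)) t) (t : ℝ) :
    HasDerivAt (fun t => N12sq (U t)) (- N22sq (U t)) t := by
  simp only [N12_eq]
  have e : - N22sq (U t) = ∑ i, - N12sq (DD i (U t)) := by
    rw [N22_eq, Finset.sum_neg_distrib]
    simp only [N12_eq]
    rw [Finset.sum_comm]
  rw [e]
  refine HasDerivAt.fun_sum fun i _ => energy (U := fun t => DD i (U t)) (fun t => ?_) t
  rw [← DD_AA]
  exact (DD i).hasFDerivAt.comp_hasDerivAt t (hU t)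

/-- Energy estimate for the lattice heat equation on ℤ². -/
theorem stmt12 (u : ℝ → ℤ × ℤ → ℝ) (φ : ℤ × ℤ → ℝ) (hφ : Memℓp φ 2)
    (hu2 : ∀ t : ℝ, 0 ≤ t → Memℓp (u t) 2)
    (hheat : ∀ p : ℤ × ℤ, ∀ t : ℝ, 0 ≤ t →
      HasDerivAt (fun s => u s p) (latLap (u t) p) t)
    (hinit : u 0 = φ)
    (C₁ : ℝ) (hC₁ : ∀ v : ℤ × ℤ → ℝ, Memℓp v 2 →
      N12sq v ≤ C₁ * ∑' p : ℤ × ℤ, (v p) ^ 2) :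
    ∀ t : ℝ, 0 ≤ t →
      (∑' p : ℤ × ℤ, (u t p) ^ 2) + (1 + t) * N12sq (u t) +
        (∫ τ in (0:ℝ)..t, N12sq (u τ)) +
        (∫ τ in (0:ℝ)..t, (1 + τ) * N22sq (u τ)) ≤
      (2 + C₁) * ∑' p : ℤ × ℤ, (φ p) ^ 2 := by
  intro T hT
  let Φ : EE := ⟨φ, hφ⟩
  let U : ℝ → EE := fun t => if h : 0 ≤ t then ⟨u t, hu2 t h⟩ else PP AA t Φ
  have hUpos : ∀ t, 0 ≤ t → ⇑(U t) = u t := by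
    intro t ht
    simp only [U, dif_pos ht]
  have hUneg : ∀ t, t ≤ 0 → U t = PP AA t Φ := by
    intro t ht
    rcases ht.eq_or_lt with h | h
    · subst h
      apply lp.ext
      rw [hUpos 0 le_rfl, PP_zero, hinit]
      rfl
    · simp only [U, dif_neg (not_le.2 h)]
  have hneg : ∀ p t, HasDerivAt (fun s => PP AA s Φ p) (AA (PP AA t Φ) p) t := by
    intro p t
    have h1 : HasDerivAt (fun s => PP AA s Φ) (AA (PP AA t Φ)) t := by
      have := (PP_deriv' AA t).clm_apply (hasDerivAt_const t Φ)
      simpa using this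
    have h2 := ((innerSL ℝ (lp.single 2 p (1 : ℝ) : EE)).hasFDerivAt.comp_hasDerivAt t h1)
    simpa [Function.comp_def, lp.inner_single_left] using h2
  have hU : ∀ p t, HasDerivAt (fun s => U s p) (AA (U t) p) t := by
    intro p t
    have hR : 0 ≤ t → HasDerivWithinAt (fun s => U s p) (AA (U t) p) (Ici 0) t := by
      intro ht
      rw [AA_apply, hUpos t ht]
      refine (hheat p t ht).hasDerivWithinAt.congr (fun s hs => ?_) ?_
      · rw [hUpos s hs]
      · rw [hUpos t ht]
    have hL : t ≤ 0 → HasDerivWithinAt (fun s => U s p) (AA (U t) p) (Iic 0) t := by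
      intro ht
      rw [hUneg t ht]
      refine (hneg p t).hasDerivWithinAt.congr (fun s hs => ?_) ?_
      · rw [hUneg s hs]
      · rw [hUneg t ht]
    rcases lt_trichotomy t 0 with h | h | h
    · exact (hL h.le).hasDerivAt (Iic_mem_nhds h)
    · subst h
      have := (hL le_rfl).union (hR le_rfl)
      rwa [Iic_union_Ici, hasDerivWithinAt_univ] at this
    · exact (hR h.le).hasDerivAt (Ici_mem_nhds h)
  have hD : ∀ t, HasDerivAt U (AA (U t)) t := fun t => good_hasDerivAt hU (all_good hU t)
  have hE1 := energy hD
  have hE2 := energy2 hD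
  have hUc : Continuous U := continuous_iff_continuousAt.2 fun t => (hD t).continuousAt
  have c1 : Continuous fun t => N12sq (U t) := by
    simp only [N12_eq]; fun_prop
  have c2 : Continuous fun t => N22sq (U t) := by
    simp only [N22_eq]; fun_prop
  have I1 : ∫ τ in (0:ℝ)..T, N12sq (u τ) = ∫ τ in (0:ℝ)..T, N12sq (U τ) := by
    refine intervalIntegral.integral_congr fun τ hτ => ?_
    rw [uIcc_of_le hT] at hτ
    simp only [hUpos τ hτ.1]
  have I2 : ∫ τ in (0:ℝ)..T, (1 + τ) * N22sq (u τ)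
      = ∫ τ in (0:ℝ)..T, (1 + τ) * N22sq (U τ) := by
    refine intervalIntegral.integral_congr fun τ hτ => ?_
    rw [uIcc_of_le hT] at hτ
    simp only [hUpos τ hτ.1]
  have F1 : ∫ τ in (0:ℝ)..T, - N12sq (U τ) = ‖U T‖ ^ 2 - ‖U 0‖ ^ 2 :=
    intervalIntegral.integral_eq_sub_of_hasDerivAt (fun t _ => hE1 t)
      (c1.neg.intervalIntegrable _ _)
  have F2 : ∫ τ in (0:ℝ)..T, (N12sq (U τ) - (1 + τ) * N22sq (U τ))
      = (1 + T) * N12sq (U T) - (1 + 0) * N12sq (U 0) := by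
    refine intervalIntegral.integral_eq_sub_of_hasDerivAt
      (f := fun τ => (1 + τ) * N12sq (U τ)) (fun t _ => ?_) ?_
    · have := ((hasDerivAt_id t).const_add 1).fun_mul (hE2 t)
      refine this.congr_deriv ?_
      simp only [id]
      ring
    · exact Continuous.intervalIntegrable (by fun_prop) _ _
  rw [intervalIntegral.integral_neg] at F1
  rw [intervalIntegral.integral_sub (c1.intervalIntegrable _ _)
    (Continuous.intervalIntegrable (by fun_prop) _ _)] at F2
  have hC := hC₁ φ hφ
  have e0 : ‖U 0‖ ^ 2 = ∑' p, (φ p) ^ 2 := by rw [EE_norm_sq, hUpos 0 le_rfl, hinit]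
  have eT : ‖U T‖ ^ 2 = ∑' p, (u T p) ^ 2 := by rw [EE_norm_sq, hUpos T hT]
  have hnn : 0 ≤ ‖U T‖ ^ 2 := by positivity
  rw [I1, I2]
  rw [hUpos 0 le_rfl, hinit, hUpos T hT] at F2
  rw [e0, eT] at F1
  rw [eT] at hnn
  linarith
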